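/- For every odd n ≥ 3, W^(1)[g_{n+2}] / W^(1)[Maj_n] = (4n−1)/(4n). -/

import Mathlib

open Finset

namespace BKS

/-- sign function: 1 if z ≥ 0, -1 otherwise. -/
noncomputable def sgn (z : ℝ) : ℝ := if 0 ≤ z then 1 else -1

/-- encode Bool as the ±1 value of a bit. -/
def chi (b : Bool) : ℝ := if b then 1 else -1

/-- Fourier coefficient of f at S. -/
noncomputable def fourierCoeff {n : ℕ} (f : (Fin n → Bool) → ℝ) (S : Finset (Fin n)) : ℝ :=
  (1 / 2 ^ n : ℝ) * ∑ x : Fin n → Bool, f x * ∏ i ∈ S, chi (x i)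

/-- Fourier weight of f at level k: W^(k)[f]. -/
noncomputable def fourierWeight {n : ℕ} (k : ℕ) (f : (Fin n → Bool) → ℝ) : ℝ :=
  ∑ S ∈ Finset.univ.filter (fun S : Finset (Fin n) => S.card = k), (fourierCoeff f S) ^ 2

/-- Noise stability of f at ρ. -/
noncomputable def noiseStab {n : ℕ} (ρ : ℝ) (f : (Fin n → Bool) → ℝ) : ℝ :=
  ∑ k ∈ Finset.range (n + 1), ρ ^ k * fourierWeight k f

/-- Majority function on n bits. -/
noncomputable def Maj (n : ℕ) : (Fin n → Bool) → ℝ := fun x => sgn (∑ i, chi (x i))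

/-- The function g_n(x) = sgn(2(x_1 + ⋯ + x_{n-3}) + x_{n-2} + x_{n-1} + x_n). -/
noncomputable def gfun (n : ℕ) : (Fin n → Bool) → ℝ :=
  fun x => sgn (∑ i : Fin n, (if (i : ℕ) < n - 3 then (2 : ℝ) else 1) * chi (x i))

/-- f is a linear threshold function. -/
def IsLTF {n : ℕ} (f : (Fin n → Bool) → ℝ) : Prop :=
  ∃ (w0 : ℝ) (w : Fin n → ℝ), ∀ x, f x = sgn (w0 + ∑ i, w i * chi (x i))

/-!
For `m` even, `g_{m+3}(x, y) = Maj_{m+1}(x, Maj_3(y))`: if `∑ xᵢ = 0` both sides are `Maj_3(y)`,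
and otherwise `|∑ xᵢ| ≥ 2`, so that neither side sees `y`. Every function of the last bit `b` has
the form `E + b * D`, hence substituting an unbiased Boolean function `h` for that bit keeps the
other level-one coefficients and replaces `f̂(last)` by the products `f̂(last) * ĥ(j)`. As
`f = Maj_n` is symmetric, its level-one weight is thereby multiplied by `(n - 1 + W¹[h]) / n`.
Finally, the level-one coefficients of `Maj_n` add up to `𝔼|∑ xᵢ|`, which shows `W¹[Maj_n] ≠ 0` and
`W¹[Maj_3] = 3 / 4`.
-/

section Chi

variable {n : ℕ}

lemma chi_not (b : Bool) : chi (!b) = -chi b := by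
  cases b <;> simp [chi]

lemma chi_mul_self (b : Bool) : chi b * chi b = 1 := by
  cases b <;> simp [chi]

lemma abs_chi (b : Bool) : |chi b| = 1 := by
  cases b <;> simp [chi]

lemma sum_chi (x : Fin n → Bool) : ∑ i, chi (x i) = 2 * #{i | x i} - n := by
  have chi_eq (b : Bool) : chi b = 2 * (if b then 1 else 0) - 1 := by
    cases b <;> norm_num [chi]
  simp only [chi_eq, sum_sub_distrib, ← mul_sum, sum_boole]
  simp

lemma sum_apply_sum_chi (F : ℝ → ℝ) :
    ∑ x : Fin n → Bool, F (∑ i, chi (x i)) =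
      ∑ j ∈ range (n + 1), n.choose j * F (2 * j - n) := by
  have sum_by_support : ∑ x : Fin n → Bool, F (∑ i, chi (x i)) =
      ∑ s ∈ (univ : Finset (Fin n)).powerset, F (2 * #s - n) :=
    sum_nbij' (fun x => ({i | x i} : Finset (Fin n))) (fun s i => decide (i ∈ s))
      (by simp) (by simp) (by simp) (by simp) (fun x _ => by rw [sum_chi])
  rw [sum_by_support, sum_powerset_apply_card fun j => F (2 * j - n)]
  simp only [card_univ, Fintype.card_fin, nsmul_eq_mul]

end Chi

section Fourier

variable {n : ℕ}

lemma fourierCoeff_empty (f : (Fin n → Bool) → ℝ) :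
    fourierCoeff f ∅ = 1 / 2 ^ n * ∑ x, f x := by
  simp only [fourierCoeff, prod_empty, mul_one]

lemma fourierCoeff_singleton (f : (Fin n → Bool) → ℝ) (i : Fin n) :
    fourierCoeff f {i} = 1 / 2 ^ n * ∑ x, f x * chi (x i) := by
  simp only [fourierCoeff, prod_singleton]

lemma fourierCoeff_add (f g : (Fin n → Bool) → ℝ) (S : Finset (Fin n)) :
    fourierCoeff (fun x => f x + g x) S = fourierCoeff f S + fourierCoeff g S := by
  simp only [fourierCoeff, add_mul, sum_add_distrib, mul_add]

lemma fourierWeight_one (f : (Fin n → Bool) → ℝ) :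
    fourierWeight 1 f = ∑ i, fourierCoeff f {i} ^ 2 := by
  rw [fourierWeight, univ_filter_card_eq, powersetCard_one, sum_map]
  rfl

lemma fourierCoeff_one (S : Finset (Fin n)) :
    fourierCoeff (fun _ => 1) S = if S = ∅ then 1 else 0 := by
  have sum_prod : ∑ x : Fin n → Bool, ∏ i ∈ S, chi (x i) =
      ∏ i, ∑ b, if i ∈ S then chi b else 1 := by
    simp only [prod_univ_sum, Fintype.piFinset_univ, prod_ite_mem, univ_inter]
  have factor (i : Fin n) : (∑ b, if i ∈ S then chi b else 1) = if i ∈ S then 0 else 2 := by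
    split_ifs <;> norm_num [chi]
  simp only [fourierCoeff, one_mul, sum_prod, factor]
  split_ifs with hS
  · simp [hS]
  · obtain ⟨i, hi⟩ := nonempty_iff_ne_empty.mpr hS
    exact mul_eq_zero_of_right _ (Finset.prod_eq_zero (mem_univ i) (if_pos hi))

lemma fourierCoeff_empty_of_odd {f : (Fin n → Bool) → ℝ}
    (hf : ∀ x, f (fun i => !x i) = -f x) : fourierCoeff f ∅ = 0 := by
  have key : ∑ x, f x = -∑ x, f x := by
    simp only [← sum_neg_distrib, ← hf]
    exact ((Equiv.piCongrRight fun _ : Fin n => Equiv.boolNot).sum_comp f).symm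
  rw [fourierCoeff_empty, self_eq_neg.mp key, mul_zero]

lemma fourierCoeff_chi_eval_empty (i : Fin n) :
    fourierCoeff (fun x => chi (x i)) ∅ = 0 :=
  fourierCoeff_empty_of_odd fun x => chi_not (x i)

lemma fourierCoeff_chi_eval_self (i : Fin n) :
    fourierCoeff (fun x => chi (x i)) {i} = 1 := by
  simp [fourierCoeff_singleton, chi_mul_self]

end Fourier

section Symmetric

variable {n : ℕ} {f : (Fin n → Bool) → ℝ}

/-- A function on the cube is symmetric if it is invariant under all permutations of the
coordinates. -/
def IsSymmetric (f : (Fin n → Bool) → ℝ) : Prop :=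
  ∀ (σ : Equiv.Perm (Fin n)) (x : Fin n → Bool), f (x ∘ σ) = f x

lemma fourierCoeff_comp_perm (f : (Fin n → Bool) → ℝ) (σ : Equiv.Perm (Fin n))
    (S : Finset (Fin n)) :
    fourierCoeff (fun x => f (x ∘ σ)) (S.map σ.toEmbedding) = fourierCoeff f S := by
  simp only [fourierCoeff, prod_map]
  congr 1
  exact (σ.symm.arrowCongr (Equiv.refl Bool)).sum_comp
    (fun x => f x * ∏ i ∈ S, chi (x i))

lemma IsSymmetric.fourierCoeff_map (hf : IsSymmetric f) (σ : Equiv.Perm (Fin n))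
    (S : Finset (Fin n)) :
    fourierCoeff f (S.map σ.toEmbedding) = fourierCoeff f S := by
  simpa only [hf σ] using fourierCoeff_comp_perm f σ S

lemma IsSymmetric.fourierCoeff_singleton_eq (hf : IsSymmetric f) (i j : Fin n) :
    fourierCoeff f {i} = fourierCoeff f {j} := by
  simpa using (hf.fourierCoeff_map (Equiv.swap i j) {i}).symm

lemma IsSymmetric.fourierWeight_one_eq (hf : IsSymmetric f) (i : Fin n) :
    fourierWeight 1 f = n * fourierCoeff f {i} ^ 2 := by
  simp [fourierWeight_one, hf.fourierCoeff_singleton_eq _ i]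

lemma IsSymmetric.mul_fourierWeight_one_eq_sq_sum (hf : IsSymmetric f) :
    n * fourierWeight 1 f = (∑ i, fourierCoeff f {i}) ^ 2 := by
  rcases n with _ | n
  · simp
  · rw [hf.fourierWeight_one_eq 0]
    simp only [hf.fourierCoeff_singleton_eq _ 0, sum_const, card_univ, Fintype.card_fin,
      nsmul_eq_mul]
    ring

end Symmetric

section Substitution

variable {m k : ℕ}

/-- The set `S ⊔ T ⊆ Fin (m + k)`, where `S` sits in the first `m` coordinates and `T` in the
last `k`; it indexes the Fourier coefficients of a function of two blocks of bits. -/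
def appendSet (S : Finset (Fin m)) (T : Finset (Fin k)) : Finset (Fin (m + k)) :=
  (S.disjSum T).map finSumFinEquiv.toEmbedding

/-- The average of `f` over its last bit, which is the constant term of `f` as a polynomial in
that bit. -/
noncomputable def lastMean (f : (Fin (m + 1) → Bool) → ℝ) (x : Fin m → Bool) : ℝ :=
  (f (Fin.snoc (α := fun _ => Bool) x true) + f (Fin.snoc (α := fun _ => Bool) x false)) / 2

/-- The discrete derivative of `f` in its last bit, which is the linear coefficient of `f` as a
polynomial in that bit. -/
noncomputable def lastDeriv (f : (Fin (m + 1) → Bool) → ℝ) (x : Fin m → Bool) : ℝ :=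
  (f (Fin.snoc (α := fun _ => Bool) x true) - f (Fin.snoc (α := fun _ => Bool) x false)) / 2

/-- The composition `(x, y) ↦ f (x, h y)`, in which the last bit of `f` is computed by `h` from
`k` fresh bits. -/
def substLast (f : (Fin (m + 1) → Bool) → ℝ) (h : (Fin k → Bool) → Bool) :
    (Fin (m + k) → Bool) → ℝ :=
  fun z => f (Fin.snoc (α := fun _ => Bool) (fun i => z (Fin.castAdd k i))
    (h fun j => z (Fin.natAdd m j)))

lemma appendSet_singleton_empty (i : Fin m) :
    appendSet {i} (∅ : Finset (Fin k)) = {Fin.castAdd k i} := by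
  ext l
  simp [appendSet]

lemma appendSet_empty_singleton (j : Fin k) :
    appendSet (∅ : Finset (Fin m)) {j} = {Fin.natAdd m j} := by
  ext l
  simp [appendSet]

lemma fourierCoeff_appendSet_mul (p : (Fin m → Bool) → ℝ) (q : (Fin k → Bool) → ℝ)
    (S : Finset (Fin m)) (T : Finset (Fin k)) :
    fourierCoeff (fun z => p (fun i => z (Fin.castAdd k i)) * q (fun j => z (Fin.natAdd m j)))
      (appendSet S T) = fourierCoeff p S * fourierCoeff q T := by
  have split_sum : ∑ z : Fin (m + k) → Bool,
      p (fun i => z (Fin.castAdd k i)) * q (fun j => z (Fin.natAdd m j)) *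
        ∏ l ∈ appendSet S T, chi (z l) =
      ∑ x, ∑ y, (p x * ∏ i ∈ S, chi (x i)) * (q y * ∏ j ∈ T, chi (y j)) := by
    rw [← Fintype.sum_prod_type', ← (Fin.appendEquiv m k).sum_comp]
    refine sum_congr rfl fun ⟨x, y⟩ _ => ?_
    simp only [Fin.appendEquiv, Equiv.coe_fn_mk, Fin.append_left, Fin.append_right, appendSet,
      prod_map, Equiv.coe_toEmbedding, prod_disjSum, finSumFinEquiv_apply_left,
      finSumFinEquiv_apply_right]
    ring
  rw [fourierCoeff, split_sum, ← sum_mul_sum, fourierCoeff, fourierCoeff, pow_add]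
  ring

lemma apply_snoc_eq_lastMean_add_lastDeriv (f : (Fin (m + 1) → Bool) → ℝ)
    (x : Fin m → Bool) (b : Bool) :
    f (Fin.snoc (α := fun _ => Bool) x b) = lastMean f x + lastDeriv f x * chi b := by
  cases b <;> simp only [lastMean, lastDeriv, chi, Bool.false_eq_true, if_true, if_false] <;> ring

lemma substLast_eval_zero (f : (Fin (m + 1) → Bool) → ℝ) :
    substLast f (fun y : Fin 1 → Bool => y 0) = f :=
  funext fun z => congrArg f (Fin.snoc_init_self z)

lemma fourierCoeff_substLast (f : (Fin (m + 1) → Bool) → ℝ) (h : (Fin k → Bool) → Bool)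
    (S : Finset (Fin m)) (T : Finset (Fin k)) :
    fourierCoeff (substLast f h) (appendSet S T) =
      fourierCoeff (lastMean f) S * (if T = ∅ then 1 else 0) +
        fourierCoeff (lastDeriv f) S * fourierCoeff (fun y => chi (h y)) T := by
  have split : substLast f h = fun z =>
      lastMean f (fun i => z (Fin.castAdd k i)) * 1 +
        lastDeriv f (fun i => z (Fin.castAdd k i)) * chi (h fun j => z (Fin.natAdd m j)) :=
    funext fun z => by simp only [substLast, apply_snoc_eq_lastMean_add_lastDeriv, mul_one]
  rw [split, fourierCoeff_add, fourierCoeff_appendSet_mul _ (fun _ => 1), fourierCoeff_one,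
    fourierCoeff_appendSet_mul _ (fun y => chi (h y))]

lemma fourierCoeff_castSucc (f : (Fin (m + 1) → Bool) → ℝ) (i : Fin m) :
    fourierCoeff f {i.castSucc} = fourierCoeff (lastMean f) {i} := by
  have key := fourierCoeff_substLast f (fun y : Fin 1 → Bool => y 0) {i} ∅
  rw [appendSet_singleton_empty, substLast_eval_zero, fourierCoeff_chi_eval_empty] at key
  simpa [Fin.castSucc] using key

lemma fourierCoeff_last (f : (Fin (m + 1) → Bool) → ℝ) :
    fourierCoeff f {Fin.last m} = fourierCoeff (lastDeriv f) ∅ := by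
  have key := fourierCoeff_substLast f (fun y : Fin 1 → Bool => y 0) ∅ {0}
  rw [appendSet_empty_singleton, substLast_eval_zero, fourierCoeff_chi_eval_self] at key
  have last_eq : Fin.natAdd m (0 : Fin 1) = Fin.last m := rfl
  simpa [last_eq] using key

lemma fourierWeight_one_substLast (f : (Fin (m + 1) → Bool) → ℝ) {h : (Fin k → Bool) → Bool}
    (hh : fourierCoeff (fun y => chi (h y)) ∅ = 0) :
    fourierWeight 1 (substLast f h) =
      ∑ i : Fin m, fourierCoeff f {i.castSucc} ^ 2 +
        fourierCoeff f {Fin.last m} ^ 2 * fourierWeight 1 (fun y => chi (h y)) := by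
  simp [fourierWeight_one, Fin.sum_univ_add, ← appendSet_singleton_empty,
    ← appendSet_empty_singleton, fourierCoeff_substLast, hh, mul_pow, mul_sum,
    fourierCoeff_castSucc, fourierCoeff_last]

lemma IsSymmetric.mul_fourierWeight_one_substLast {f : (Fin (m + 1) → Bool) → ℝ}
    (hf : IsSymmetric f) {h : (Fin k → Bool) → Bool}
    (hh : fourierCoeff (fun y => chi (h y)) ∅ = 0) :
    (m + 1) * fourierWeight 1 (substLast f h) =
      (m + fourierWeight 1 (fun y => chi (h y))) * fourierWeight 1 f := by
  simp only [fourierWeight_one_substLast f hh, hf.fourierWeight_one_eq (Fin.last m),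
    hf.fourierCoeff_singleton_eq _ (Fin.last m), sum_const, card_univ, Fintype.card_fin,
    nsmul_eq_mul, Nat.cast_add, Nat.cast_one]
  ring

end Substitution

section Sign

lemma chi_decide (z : ℝ) : chi (decide (0 ≤ z)) = sgn z := by
  simp only [chi, sgn, decide_eq_true_eq]

lemma sgn_of_nonneg {z : ℝ} (hz : 0 ≤ z) : sgn z = 1 := if_pos hz

lemma sgn_of_neg {z : ℝ} (hz : z < 0) : sgn z = -1 := if_neg hz.not_ge

lemma sgn_neg {z : ℝ} (hz : z ≠ 0) : sgn (-z) = -sgn z := by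
  rcases hz.lt_or_gt with hz | hz
  · rw [sgn_of_neg hz, sgn_of_nonneg (by linarith), neg_neg]
  · rw [sgn_of_nonneg hz.le, sgn_of_neg (by linarith)]

lemma sgn_mul_self (z : ℝ) : sgn z * z = |z| := by
  rcases le_or_gt 0 z with hz | hz
  · rw [sgn_of_nonneg hz, one_mul, abs_of_nonneg hz]
  · rw [sgn_of_neg hz, neg_one_mul, abs_of_neg hz]

lemma sgn_mul_add_eq {c s t : ℝ} (hs : s = 0 ∨ 2 ≤ |s|) (ht : |t| < 2 * c) :
    sgn (c * s + t) = sgn (s + sgn t) := by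
  obtain ⟨ht₁, ht₂⟩ := abs_lt.mp ht
  have sgn_t : -1 ≤ sgn t ∧ sgn t ≤ 1 := by
    unfold sgn; split_ifs <;> norm_num
  rcases hs with rfl | hs
  · rw [mul_zero, zero_add, zero_add]
    rcases le_or_gt 0 t with ht | ht
    · rw [sgn_of_nonneg ht, sgn_of_nonneg zero_le_one]
    · rw [sgn_of_neg ht, sgn_of_neg neg_one_lt_zero]
  · rcases le_abs'.mp hs with hs | hs
    · rw [sgn_of_neg (by nlinarith), sgn_of_neg (by linarith)]
    · rw [sgn_of_nonneg (by nlinarith), sgn_of_nonneg (by linarith)]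

end Sign

section Majority

variable {n : ℕ}

/-- The majority of `n` bits as a bit; `Maj n` is its `±1`-valued version. A bit is what
`substLast` can feed into another function on the cube. -/
noncomputable def majBit (n : ℕ) (x : Fin n → Bool) : Bool :=
  decide (0 ≤ ∑ i, chi (x i))

lemma chi_majBit (x : Fin n → Bool) : chi (majBit n x) = Maj n x :=
  chi_decide _

lemma sum_chi_ne_zero_of_odd (hn : Odd n) (x : Fin n → Bool) : ∑ i, chi (x i) ≠ 0 := by
  obtain ⟨m, rfl⟩ := hn
  rw [sum_chi, sub_ne_zero]
  norm_cast
  omega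

lemma sum_chi_eq_zero_or_two_le_abs_of_even (hn : Even n) (x : Fin n → Bool) :
    ∑ i, chi (x i) = 0 ∨ 2 ≤ |∑ i, chi (x i)| := by
  obtain ⟨m, rfl⟩ := hn
  obtain ⟨d, sum_eq⟩ : ∃ d : ℤ, ∑ i, chi (x i) = 2 * d :=
    ⟨#{i | x i} - m, by rw [sum_chi]; push_cast; ring⟩
  rw [sum_eq]
  rcases eq_or_ne d 0 with rfl | hd
  · simp
  · have one_le : (1 : ℝ) ≤ |(d : ℝ)| := mod_cast Int.one_le_abs hd
    right
    rw [abs_mul, abs_two]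
    linarith

lemma isSymmetric_Maj (n : ℕ) : IsSymmetric (Maj n) := fun σ x =>
  congrArg sgn (Equiv.sum_comp σ fun i => chi (x i))

lemma fourierCoeff_Maj_empty (hn : Odd n) : fourierCoeff (Maj n) ∅ = 0 := by
  refine fourierCoeff_empty_of_odd fun x => ?_
  simp only [Maj, chi_not, sum_neg_distrib]
  exact sgn_neg (sum_chi_ne_zero_of_odd hn x)

lemma sum_fourierCoeff_Maj_singleton (n : ℕ) :
    ∑ i, fourierCoeff (Maj n) {i} = 1 / 2 ^ n * ∑ x : Fin n → Bool, |∑ i, chi (x i)| := by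
  simp only [fourierCoeff_singleton, ← mul_sum]
  rw [sum_comm]
  simp only [← mul_sum, Maj, sgn_mul_self]

lemma mul_fourierWeight_one_Maj (n : ℕ) :
    n * fourierWeight 1 (Maj n) = (1 / 2 ^ n * ∑ x : Fin n → Bool, |∑ i, chi (x i)|) ^ 2 := by
  rw [← sum_fourierCoeff_Maj_singleton, (isSymmetric_Maj n).mul_fourierWeight_one_eq_sq_sum]

lemma fourierWeight_one_Maj_ne_zero (hn : n ≠ 0) : fourierWeight 1 (Maj n) ≠ 0 := by
  have sum_pos : 0 < ∑ x : Fin n → Bool, |∑ i, chi (x i)| :=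
    sum_pos' (fun _ _ => abs_nonneg _)
      ⟨fun _ => true, mem_univ _, by simp [chi, Nat.pos_of_ne_zero hn]⟩
  refine right_ne_zero_of_mul (a := (n : ℝ)) ?_
  rw [mul_fourierWeight_one_Maj]
  positivity

lemma fourierWeight_one_Maj_three : fourierWeight 1 (Maj 3) = 3 / 4 := by
  have sum_abs : ∑ x : Fin 3 → Bool, |∑ i, chi (x i)| = 12 := by
    rw [sum_apply_sum_chi fun s => |s|]
    norm_num [sum_range_succ, Nat.choose]
  have key : 3 * fourierWeight 1 (Maj 3) = (1 / 2 ^ 3 * 12) ^ 2 := by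
    simpa only [sum_abs, Nat.cast_ofNat] using mul_fourierWeight_one_Maj 3
  linarith

lemma gfun_add_three_apply (m : ℕ) (z : Fin (m + 3) → Bool) :
    gfun (m + 3) z =
      sgn (2 * ∑ i, chi (z (Fin.castAdd 3 i)) + ∑ j, chi (z (Fin.natAdd m j))) := by
  simp [gfun, Fin.sum_univ_add, mul_sum]

lemma gfun_eq_substLast_Maj {m : ℕ} (hm : Even m) :
    gfun (m + 3) = substLast (Maj (m + 1)) (majBit 3) := by
  funext z
  have abs_sum_lt : |∑ j, chi (z (Fin.natAdd m j))| < 2 * 2 :=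
    (abs_sum_le_sum_abs _ _).trans_lt (by norm_num [abs_chi])
  rw [gfun_add_three_apply,
    sgn_mul_add_eq (sum_chi_eq_zero_or_two_le_abs_of_even hm _) abs_sum_lt]
  simp [substLast, Maj, Fin.sum_univ_castSucc, chi_majBit]

end Majority

theorem stmt14 (n : ℕ) (hn : Odd n) (h3 : 3 ≤ n) :
    fourierWeight 1 (gfun (n + 2)) / fourierWeight 1 (Maj n) =
      (4 * (n : ℝ) - 1) / (4 * (n : ℝ)) := by
  obtain ⟨m, rfl⟩ := hn
  have maj_ne_zero : fourierWeight 1 (Maj (2 * m + 1)) ≠ 0 :=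
    fourierWeight_one_Maj_ne_zero (Nat.succ_ne_zero _)
  have maj_three_unbiased : fourierCoeff (fun y => chi (majBit 3 y)) ∅ = 0 := by
    simpa only [chi_majBit] using fourierCoeff_Maj_empty (by decide : Odd 3)
  have weight_eq := (isSymmetric_Maj (2 * m + 1)).mul_fourierWeight_one_substLast maj_three_unbiased
  rw [← gfun_eq_substLast_Maj (even_two_mul m)] at weight_eq
  simp only [chi_majBit, fourierWeight_one_Maj_three] at weight_eq
  rw [div_eq_div_iff maj_ne_zero (by positivity)]
  push_cast at weight_eq ⊢
  linear_combination 4 * weight_eq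

end BKS
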